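/- arXiv:1804.02785 — 3 statements merged into one kernel-verified Lean document; each statement's English description precedes it below -/
import Mathlib

section
/- For every constant 0 < δ < 1 there exist a constant c > 0 and an integer N (both depending only on δ) such that the following holds for all n ≥ N. Let H = (V, E) be an unweighted graph equal to a star S_n plus a subgraph H[V'] = (V', E') supported on the n leaves V'. If H[V'] has no path cover 𝒫 with |𝒫| < δn, then for every edge set P ⊆ E' with |P| ≤ n − 1, log T(S_n + P) ≤ (1 − c) · log T(F_n). -/
open Matrix

/-- The Laplacian matrix of a weighted graph given by a weight function. -/
def lapG {V : Type*} [Fintype V] [DecidableEq V] (W : V → V → ℝ) : Matrix V V ℝ :=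
  fun i j => if i = j then ∑ k, W i k else -(W i j)

/-- The (weighted) number of spanning trees: determinant of the Laplacian with the
row and column of the last vertex removed. -/
def nst {n : ℕ} (W : Fin (n + 1) → Fin (n + 1) → ℝ) : ℝ :=
  ((lapG W).submatrix Fin.castSucc Fin.castSucc).det

/-- The star graph `S_n`: the central vertex is `Fin.last n`, joined to the `n`
leaves `0, …, n-1` by unit-weight edges. -/
def starW (n : ℕ) : Fin (n + 1) → Fin (n + 1) → ℝ :=
  fun i j => if i ≠ j ∧ (i = Fin.last n ∨ j = Fin.last n) then 1 else 0

/-- The fan graph `F_n`: the star `S_n` plus a path of `n - 1` unit-weight edges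
through the `n` leaves. -/
def fanW (n : ℕ) : Fin (n + 1) → Fin (n + 1) → ℝ :=
  fun i j => starW n i j +
    if ((i : ℕ) + 1 = (j : ℕ) ∧ j ≠ Fin.last n) ∨
       ((j : ℕ) + 1 = (i : ℕ) ∧ i ≠ Fin.last n) then 1 else 0

/-- The star `S_n` plus the set `P` of unit-weight edges between leaves. -/
def starPlusEdges (n : ℕ) (P : Finset (Sym2 (Fin n))) : Fin (n + 1) → Fin (n + 1) → ℝ :=
  fun i j => starW n i j +
    if ∃ a b : Fin n, i = a.castSucc ∧ j = b.castSucc ∧ s(a, b) ∈ P then 1 else 0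

/-- `Ps` is a path cover of the graph on the `n` leaves with edge set `E`:
each member is a nonempty duplicate-free list whose consecutive pairs are
edges of `E`, the members are pairwise vertex-disjoint, and every leaf is covered. -/
def IsPathCoverOf (n : ℕ) (E : Finset (Sym2 (Fin n))) (Ps : List (List (Fin n))) : Prop :=
  (∀ l ∈ Ps, l ≠ [] ∧ l.Nodup ∧ l.Chain' (fun a b => s(a, b) ∈ E)) ∧
    Ps.Pairwise (fun l₁ l₂ => ∀ x ∈ l₁, x ∉ l₂) ∧
    (∀ v : Fin n, ∃ l ∈ Ps, v ∈ l)


set_option linter.unusedSectionVars false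


section PartOne
variable {V : Type*} [Fintype V] [DecidableEq V]

def bv (a b : V) : V → ℝ := Pi.single a 1 - Pi.single b 1

def eM : Sym2 V → Matrix V V ℝ :=
  Sym2.lift ⟨fun a b => vecMulVec (bv a b) (bv a b), by
    intro a b
    have : bv b a = -bv a b := by simp [bv]
    beta_reduce
    rw [this, neg_vecMulVec, vecMulVec_neg, neg_neg]⟩

def eQ (x : V → ℝ) : Sym2 V → ℝ :=
  Sym2.lift ⟨fun a b => (x a - x b) ^ 2, by intro a b; ring⟩

@[simp] lemma eM_mk (a b : V) : eM s(a, b) = vecMulVec (bv a b) (bv a b) := rfl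
@[simp] lemma eQ_mk (x : V → ℝ) (a b : V) : eQ x s(a, b) = (x a - x b) ^ 2 := rfl

lemma eQ_nonneg (x : V → ℝ) (e : Sym2 V) : 0 ≤ eQ x e := by
  induction e using Sym2.ind with
  | _ a b => simpa using sq_nonneg _

def AM (S : Finset (Sym2 V)) : Matrix V V ℝ := 1 + ∑ e ∈ S, eM e

def En (S : Finset (Sym2 V)) (x : V → ℝ) : ℝ := ∑ v, x v ^ 2 + ∑ e ∈ S, eQ x e

lemma En_ge (S T : Finset (Sym2 V)) (W : Finset V) (h : T ⊆ S) (x : V → ℝ) :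
    ∑ v ∈ W, x v ^ 2 + ∑ e ∈ T, eQ x e ≤ En S x := by
  unfold En
  apply add_le_add
  · exact Finset.sum_le_sum_of_subset_of_nonneg (Finset.subset_univ _)
      (fun _ _ _ => sq_nonneg _)
  · exact Finset.sum_le_sum_of_subset_of_nonneg h (fun _ _ _ => eQ_nonneg _ _)

lemma En_nonneg (S : Finset (Sym2 V)) (x : V → ℝ) : 0 ≤ En S x := by
  have := En_ge S ∅ ∅ (by simp) x
  simpa using this

lemma bv_dot (a b : V) (x : V → ℝ) : bv a b ⬝ᵥ x = x a - x b := by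
  simp [bv, sub_dotProduct]

lemma eM_quad (e : Sym2 V) (x : V → ℝ) : x ⬝ᵥ (eM e *ᵥ x) = eQ x e := by
  induction e using Sym2.ind with
  | _ a b =>
    rw [eM_mk, vecMulVec_mulVec, eQ_mk]
    rw [bv_dot, dotProduct_comm, smul_dotProduct, bv_dot]
    simp
    ring

lemma AM_quad (S : Finset (Sym2 V)) (x : V → ℝ) : x ⬝ᵥ (AM S *ᵥ x) = En S x := by
  unfold AM En
  rw [add_mulVec, dotProduct_add, one_mulVec, sum_mulVec, dotProduct_sum]
  congr 1
  · simp [dotProduct, sq]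
  · exact Finset.sum_congr rfl fun e _ => eM_quad e x

lemma eM_symm (e : Sym2 V) : (eM e)ᵀ = eM e := by
  induction e using Sym2.ind with
  | _ a b => rw [eM_mk, transpose_vecMulVec]

lemma AM_symm (S : Finset (Sym2 V)) : (AM S)ᵀ = AM S := by
  unfold AM
  rw [transpose_add, transpose_one, transpose_sum]
  simp [eM_symm]

/-- effective resistance vector -/
noncomputable def yv (S : Finset (Sym2 V)) (a b : V) : V → ℝ := (AM S)⁻¹ *ᵥ bv a b

noncomputable def Rs (S : Finset (Sym2 V)) (a b : V) : ℝ := bv a b ⬝ᵥ yv S a b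

lemma AM_insert (S : Finset (Sym2 V)) (a b : V) (h : s(a, b) ∉ S) :
    AM (insert s(a, b) S) = AM S + vecMulVec (bv a b) (bv a b) := by
  unfold AM
  rw [Finset.sum_insert h, eM_mk]; abel

lemma det_insert (S : Finset (Sym2 V)) (a b : V) (h : s(a, b) ∉ S) (hd : 0 < (AM S).det) :
    (AM (insert s(a, b) S)).det = (AM S).det * (1 + Rs S a b) := by
  rw [AM_insert S a b h, vecMulVec_eq Unit,
    det_add_replicateCol_mul_replicateRow (isUnit_iff_ne_zero.2 hd.ne')]
  congr 1
  rw [det_unique]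
  simp only [Matrix.add_apply, Matrix.one_apply_eq]
  congr 1
  rw [Matrix.mul_assoc, ← Matrix.replicateCol_mulVec, Matrix.replicateRow_mul_replicateCol_apply]
  rfl

lemma AM_yv (S : Finset (Sym2 V)) (a b : V) (hd : 0 < (AM S).det) :
    AM S *ᵥ yv S a b = bv a b := by
  unfold yv
  rw [mulVec_mulVec, mul_nonsing_inv _ (isUnit_iff_ne_zero.2 hd.ne'), one_mulVec]

lemma Rs_eq (S : Finset (Sym2 V)) (a b : V) (hd : 0 < (AM S).det) :
    Rs S a b = En S (yv S a b) := by
  rw [← AM_quad, AM_yv S a b hd, dotProduct_comm]; rfl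

lemma Rs_le (S : Finset (Sym2 V)) (a b : V) (hd : 0 < (AM S).det) (C : ℝ) (hC : 0 ≤ C)
    (h : ∀ x : V → ℝ, (x a - x b) ^ 2 ≤ C * En S x) : Rs S a b ≤ C := by
  have h1 := h (yv S a b)
  rw [← bv_dot] at h1
  change (Rs S a b) ^ 2 ≤ _ at h1
  rw [← Rs_eq S a b hd] at h1
  have h0 : 0 ≤ Rs S a b := by rw [Rs_eq S a b hd]; exact En_nonneg _ _
  by_contra hlt
  push Not at hlt
  nlinarith

lemma Rs_ge (S : Finset (Sym2 V)) (a b : V) (hd : 0 < (AM S).det) (x : V → ℝ) :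
    2 * (x a - x b) - En S x ≤ Rs S a b := by
  have h := En_nonneg S (x - yv S a b)
  rw [← AM_quad, mulVec_sub, AM_yv S a b hd, sub_dotProduct, dotProduct_sub, dotProduct_sub,
    AM_quad] at h
  have h2 : yv S a b ⬝ᵥ (AM S *ᵥ x) = x a - x b := by
    rw [dotProduct_mulVec, ← mulVec_transpose, AM_symm, AM_yv S a b hd, bv_dot]
  rw [h2, dotProduct_comm x, bv_dot, dotProduct_comm (yv S a b)] at h
  unfold Rs
  linarith

lemma det_pos (S : Finset (Sym2 V)) : 0 < (AM S).det := by
  induction S using Finset.induction_on with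
  | empty => simp [AM]
  | insert e S he ih =>
    induction e using Sym2.ind with
    | _ a b =>
      rw [det_insert S a b he ih]
      have : 0 ≤ Rs S a b := by rw [Rs_eq S a b ih]; exact En_nonneg _ _
      positivity

noncomputable def gS (S : Finset (Sym2 V)) : ℝ := (AM S).det / √5 ^ S.card

lemma gS_pos (S : Finset (Sym2 V)) : 0 < gS S := by
  have := det_pos S
  unfold gS
  positivity

lemma gS_step (S : Finset (Sym2 V)) (a b : V) (h : s(a, b) ∉ S) (C : ℝ) (hC : 0 ≤ C)
    (hx : ∀ x : V → ℝ, (x a - x b) ^ 2 ≤ C * En S x) :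
    gS (insert s(a, b) S) ≤ gS S * ((1 + C) / √5) := by
  unfold gS
  rw [det_insert S a b h (det_pos S), Finset.card_insert_of_notMem h, pow_succ]
  have h1 := Rs_le S a b (det_pos S) C hC hx
  have h2 := det_pos S
  rw [div_mul_div_comm]
  gcongr

end PartOne

section PartTwo
variable {V : Type*} [Fintype V] [DecidableEq V]

def pE (x : V → ℝ) : List V → ℝ
  | [] => 0
  | [a] => x a ^ 2
  | a :: b :: l => x a ^ 2 + (x a - x b) ^ 2 + pE x (b :: l)

def pEd : List V → Finset (Sym2 V)
  | [] => ∅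
  | [_] => ∅
  | a :: b :: l => insert s(a, b) (pEd (b :: l))

lemma mem_pEd : ∀ (l : List V) (e : Sym2 V), e ∈ pEd l → ∀ v ∈ e, v ∈ l
  | [], e, h => by simp [pEd] at h
  | [_], e, h => by simp [pEd] at h
  | a :: b :: l, e, h => by
    intro v hv
    simp only [pEd, Finset.mem_insert] at h
    rcases h with h | h
    · subst h
      simp only [Sym2.mem_iff] at hv
      rcases hv with rfl | rfl <;> simp
    · exact List.mem_cons_of_mem _ (mem_pEd (b :: l) e h v hv)

lemma pE_eq (x : V → ℝ) : ∀ l : List V, l.Nodup →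
    pE x l = ∑ v ∈ l.toFinset, x v ^ 2 + ∑ e ∈ pEd l, eQ x e
  | [], _ => by simp [pE, pEd]
  | [a], _ => by simp [pE, pEd]
  | a :: b :: l, h => by
    have h1 : a ∉ (b :: l) := (List.nodup_cons.1 h).1
    have h2 : (b :: l).Nodup := (List.nodup_cons.1 h).2
    have h3 : s(a, b) ∉ pEd (b :: l) := fun hh => h1 (mem_pEd _ _ hh a (by simp))
    rw [List.toFinset_cons, Finset.sum_insert (by simpa using h1)]
    simp only [pE, pEd]
    rw [Finset.sum_insert h3, pE_eq x (b :: l) h2, eQ_mk]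
    ring

lemma pE_le (S : Finset (Sym2 V)) (x : V → ℝ) (l : List V) (h : l.Nodup) (hS : pEd l ⊆ S) :
    pE x l ≤ En S x := by
  rw [pE_eq x l h]
  exact En_ge S _ _ hS x

lemma pE_le' (S : Finset (Sym2 V)) (x : V → ℝ) (a : V) (l : List V) (h : (a :: l).Nodup)
    (hS : pEd l ⊆ S) : x a ^ 2 + pE x l ≤ En S x := by
  rw [pE_eq x l (List.nodup_cons.1 h).2]
  have := En_ge S _ (insert a l.toFinset) hS x
  rw [Finset.sum_insert (by simpa using (List.nodup_cons.1 h).1)] at this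
  linarith

lemma pE_head (x : V → ℝ) : ∀ (l : List V) (a : V),
    (Nat.fib (2 * l.length + 2) : ℝ) * x a ^ 2 ≤ Nat.fib (2 * l.length + 1) * pE x (a :: l)
  | [], a => by simp [pE]
  | b :: l, a => by
    have ih := pE_head x l b
    have e1 : Nat.fib (2 * (b :: l).length + 2)
      = Nat.fib (2 * l.length + 2) + Nat.fib (2 * l.length + 2 + 1) := by
      simp only [List.length_cons]
      rw [show 2 * (l.length + 1) + 2 = (2 * l.length + 2) + 2 by ring, Nat.fib_add_two]
    have e2 : Nat.fib (2 * (b :: l).length + 1) = Nat.fib (2 * l.length + 2 + 1) := by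
      simp only [List.length_cons]; rfl
    have e3 : Nat.fib (2 * l.length + 2 + 1)
      = Nat.fib (2 * l.length + 1) + Nat.fib (2 * l.length + 2) := by
      rw [show 2 * l.length + 2 + 1 = (2 * l.length + 1) + 2 by ring, Nat.fib_add_two]
    rw [e1, e2, e3]
    push_cast
    have hq : (0 : ℝ) < Nat.fib (2 * l.length + 1) := by
      exact_mod_cast Nat.fib_pos.2 (by omega)
    have hp : (0 : ℝ) < Nat.fib (2 * l.length + 2) := by
      exact_mod_cast Nat.fib_pos.2 (by omega)
    simp only [pE]
    set p : ℝ := (Nat.fib (2 * l.length + 2) : ℝ)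
    set q : ℝ := (Nat.fib (2 * l.length + 1) : ℝ)
    set E := pE x (b :: l)
    have hE : p / q * x b ^ 2 ≤ E := by
      rw [div_mul_eq_mul_div, div_le_iff₀ hq]; linarith
    have h1 : (p + (q + p)) * x a ^ 2 ≤ (q + p) * (x a ^ 2 + (x a - x b) ^ 2 + p / q * x b ^ 2) := by
      have : (q + p) * (x a ^ 2 + (x a - x b) ^ 2 + p / q * x b ^ 2) - (p + (q + p)) * x a ^ 2
        = (q * x a - (q + p) * x b) ^ 2 / q := by
        field_simp; ring
      have h2 : 0 ≤ (q * x a - (q + p) * x b) ^ 2 / q := by positivity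
      linarith
    refine h1.trans ?_
    gcongr

lemma sqrt5_lb : (2.236 : ℝ) < √5 := by
  rw [Real.lt_sqrt (by norm_num)]; norm_num
lemma sqrt5_ub : √5 < (2.2361 : ℝ) := by
  rw [Real.sqrt_lt' (by norm_num)]; norm_num
lemma sqrt5_sq : √5 * √5 = (5 : ℝ) := Real.mul_self_sqrt (by norm_num)

lemma gS_path (S : Finset (Sym2 V)) : ∀ (l : List V) (a : V), (a :: l).Nodup →
    gS (pEd (a :: l) ∪ S) ≤ gS S * (Nat.fib (2 * l.length + 2) / √5 ^ l.length)
  | [], a, _ => by simp [pEd]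
  | b :: l, a, h => by
    have ih := gS_path S l b (List.nodup_cons.1 h).2
    have e1 : Nat.fib (2 * (b :: l).length + 2)
      = 2 * Nat.fib (2 * l.length + 2) + Nat.fib (2 * l.length + 1) := by
      simp only [List.length_cons]
      have f1 := Nat.fib_add_two (n := 2 * l.length + 2)
      have f2 := Nat.fib_add_two (n := 2 * l.length + 1)
      rw [show 2 * (l.length + 1) + 2 = (2 * l.length + 2) + 2 by ring]
      rw [show 2 * l.length + 2 + 1 = (2 * l.length + 1) + 2 by ring] at f1
      rw [f1, f2]
      ring_nf
    have hq : (0 : ℝ) < Nat.fib (2 * l.length + 1) := by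
      exact_mod_cast Nat.fib_pos.2 (by omega)
    have hp : (0 : ℝ) < Nat.fib (2 * l.length + 2) := by
      exact_mod_cast Nat.fib_pos.2 (by omega)
    have hpq : (Nat.fib (2 * l.length + 2) : ℝ) ≤ 2 * Nat.fib (2 * l.length + 1) := by
      rw [Nat.fib_add_two]
      have : Nat.fib (2 * l.length) ≤ Nat.fib (2 * l.length + 1) := Nat.fib_le_fib_succ
      have : (Nat.fib (2 * l.length) : ℝ) ≤ Nat.fib (2 * l.length + 1) := by exact_mod_cast this
      push_cast; linarith
    have s1 := sqrt5_ub
    have s0 := sqrt5_lb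
    have hh : ∀ x : V → ℝ, _ := fun x => pE_head x l b
    have key : gS (pEd (a :: b :: l) ∪ S) ≤ gS (pEd (b :: l) ∪ S) *
        ((1 + (1 + (Nat.fib (2 * l.length + 1) : ℝ) / Nat.fib (2 * l.length + 2))) / √5) := by
      have e : pEd (a :: b :: l) ∪ S = insert s(a, b) (pEd (b :: l) ∪ S) := by
        simp [pEd]
      rw [e]
      set p : ℝ := (Nat.fib (2 * l.length + 2) : ℝ)
      set q : ℝ := (Nat.fib (2 * l.length + 1) : ℝ)
      by_cases hm : s(a, b) ∈ pEd (b :: l) ∪ S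
      · rw [Finset.insert_eq_of_mem hm]
        apply le_mul_of_one_le_right (gS_pos _).le
        rw [le_div_iff₀ (by linarith)]
        have : (1 / 2 : ℝ) ≤ q / p := by rw [le_div_iff₀ hp]; linarith
        linarith
      · refine gS_step _ _ _ hm _ (by positivity) ?_
        intro x
        have h1 := pE_le' (pEd (b :: l) ∪ S) x a (b :: l) h Finset.subset_union_left
        have h2 := hh x
        have h3 : p / q * x b ^ 2 ≤ pE x (b :: l) := by
          rw [div_mul_eq_mul_div, div_le_iff₀ hq]; linarith
        have h4 : (x a - x b) ^ 2 ≤ (1 + q / p) * (x a ^ 2 + p / q * x b ^ 2) := by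
          have : (1 + q / p) * (x a ^ 2 + p / q * x b ^ 2) - (x a - x b) ^ 2
            = (q * x a + p * x b) ^ 2 / (p * q) := by
            field_simp; ring
          have h2 : 0 ≤ (q * x a + p * x b) ^ 2 / (p * q) := by positivity
          linarith
        refine h4.trans ?_
        gcongr
        linarith
    refine key.trans ?_
    rw [e1]
    have : gS S * (((2 * Nat.fib (2 * l.length + 2) + Nat.fib (2 * l.length + 1) : ℕ) : ℝ)
        / √5 ^ (b :: l).length) = (gS S * (Nat.fib (2 * l.length + 2) / √5 ^ l.length)) *
        ((1 + (1 + (Nat.fib (2 * l.length + 1) : ℝ) / Nat.fib (2 * l.length + 2))) / √5) := by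
      push_cast
      rw [List.length_cons, pow_succ]
      field_simp
      ring
    rw [this]
    gcongr

def psEd : List (List V) → Finset (Sym2 V)
  | [] => ∅
  | l :: Ps => pEd l ∪ psEd Ps

lemma pEd_sub_psEd : ∀ (Ps : List (List V)) (l : List V), l ∈ Ps → pEd l ⊆ psEd Ps
  | [], l, h => by simp at h
  | m :: Ps, l, h => by
    simp only [psEd]
    rcases List.mem_cons.1 h with rfl | h
    · exact Finset.subset_union_left
    · exact (pEd_sub_psEd Ps l h).trans Finset.subset_union_right

lemma psEd_sub (T : Finset (Sym2 V)) : ∀ (Ps : List (List V)), (∀ l ∈ Ps, pEd l ⊆ T) → psEd Ps ⊆ T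
  | [], h => by simp [psEd]
  | m :: Ps, h => by
    simp only [psEd]
    exact Finset.union_subset (h m (by simp)) (psEd_sub T Ps fun l hl => h l (by simp [hl]))

lemma gS_psEd : ∀ (Ps : List (List V)), (∀ l ∈ Ps, l ≠ [] ∧ l.Nodup) →
    gS (psEd Ps) ≤ (Ps.map fun l => (Nat.fib (2 * l.length) : ℝ) / √5 ^ (l.length - 1)).prod
  | [], h => by simp [psEd, gS, AM]
  | l :: Ps, h => by
    have ih := gS_psEd Ps fun m hm => h m (by simp [hm])
    obtain ⟨h1, h2⟩ := h l (by simp)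
    rcases l with _ | ⟨a, l⟩
    · simp at h1
    simp only [psEd, List.map_cons, List.prod_cons]
    refine (gS_path (psEd Ps) l a h2).trans ?_
    rw [mul_comm]
    simp only [List.length_cons, Nat.add_sub_cancel]
    rw [show 2 * (l.length + 1) = 2 * l.length + 2 by ring]
    gcongr

lemma pE_cons (x : V → ℝ) (a : V) (l : List V) (h : l ≠ []) :
    pE x (a :: l) = x a ^ 2 + (x a - x (l.head h)) ^ 2 + pE x l := by
  cases l with
  | nil => simp at h
  | cons b l => rfl

lemma pE_concat (x : V → ℝ) (b : V) : ∀ (l : List V) (h : l ≠ []),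
    pE x (l ++ [b]) = pE x l + (x (l.getLast h) - x b) ^ 2 + x b ^ 2
  | [], h => by simp at h
  | [a], h => by simp [pE]
  | a :: c :: l, h => by
    have := pE_concat x b (c :: l) (by simp)
    simp only [List.cons_append, pE] at this ⊢
    rw [this]
    rw [List.getLast_cons (by simp : c :: l ≠ [])]
    ring

open Real goldenRatio in
lemma pE_ends (x : V → ℝ) (l : List V) : ∀ (h : l ≠ []),
    (x (l.head h) - x (l.getLast h)) ^ 2 ≤ (√5 - 1) * pE x l := by
  have s0 := sqrt5_lb
  have s1 := sqrt5_ub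
  have s2 := sqrt5_sq
  induction l using List.bidirectionalRec with
  | nil => intro h; simp at h
  | singleton a =>
    intro h
    simp only [List.head_cons, List.getLast_singleton, pE, sub_self]
    have := sq_nonneg (x a)
    nlinarith
  | cons_append a l b ih =>
    intro h
    have e : (a :: (l ++ [b])).getLast h = b := by simp
    rw [e, List.head_cons]
    by_cases hl : l = []
    · subst hl
      simp only [List.nil_append, pE]
      have : (x a - x b) ^ 2 ≤ 1 * (x a ^ 2 + (x a - x b) ^ 2 + x b ^ 2) := by
        nlinarith [sq_nonneg (x a), sq_nonneg (x b)]
      refine this.trans ?_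
      gcongr; linarith
    · have ih := ih hl
      rw [pE_cons x a (l ++ [b]) (by simp), pE_concat x b l hl]
      have e2 : (l ++ [b]).head (by simp) = l.head hl := List.head_append_of_ne_nil hl
      rw [e2]
      set c := x (l.head hl)
      set d := x (l.getLast hl)
      set E := pE x l
      set s := √5
      -- symmetric/antisymmetric decomposition
      have h1 : (x a - x b) ^ 2 + ((x a - x b) - (c - d)) ^ 2
          ≤ 2 * (x a ^ 2 + (x a - c) ^ 2 + (d - x b) ^ 2 + x b ^ 2) := by
        nlinarith [sq_nonneg (x a + x b), sq_nonneg ((x a - c) - (d - x b))]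
      set D := x a - x b
      set y := c - d
      have h3 : D ^ 2 ≤ y ^ 2 + (s - 1) / 2 * (D ^ 2 + (D - y) ^ 2) := by
        have : y ^ 2 + (s - 1) / 2 * (D ^ 2 + (D - y) ^ 2) - D ^ 2
          = (s + 1) / 2 * (y - (3 - s) / 2 * D) ^ 2 := by
          have : s * s = 5 := s2
          have h3 : s ^ 3 = 5 * s := by nlinarith
          ring_nf
          rw [h3, show s ^ 2 = 5 by nlinarith]
          ring
        have h2 : 0 ≤ (s + 1) / 2 * (y - (3 - s) / 2 * D) ^ 2 := by
          have : 0 ≤ s + 1 := by linarith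
          positivity
        linarith
      have h4 : (s - 1) / 2 * (D ^ 2 + (D - y) ^ 2) ≤ (s - 1) / 2 * (2 * (x a ^ 2 + (x a - c) ^ 2 + (d - x b) ^ 2 + x b ^ 2)) := by
        apply mul_le_mul_of_nonneg_left h1; linarith
      linarith

end PartTwo

section PartThree
variable {V : Type*} [Fintype V] [DecidableEq V]

lemma caseA1 (S : Finset (Sym2 V)) (u v w1 w2 : V) (h12 : w1 ≠ w2) (hu1 : u ≠ w1) (hu2 : u ≠ w2)
    (huv : u ≠ v) (hv1 : v ≠ w1) (hv2 : v ≠ w2) (m1 : s(u, w1) ∈ S) (m2 : s(u, w2) ∈ S)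
    (x : V → ℝ) : (x u - x v) ^ 2 ≤ 3 / 2 * En S x := by
  have h := En_ge S {s(u, w1), s(u, w2)} {u, v, w1, w2} (by
    intro e he; simp only [Finset.mem_insert, Finset.mem_singleton] at he
    rcases he with rfl | rfl <;> assumption) x
  rw [Finset.sum_insert (by simp [*]), Finset.sum_insert (by simp [*]),
    Finset.sum_insert (by simp [*]), Finset.sum_singleton, Finset.sum_insert (by
      simp only [Finset.mem_singleton, Sym2.eq_iff]; grind), Finset.sum_singleton] at h
  simp only [eQ_mk] at h
  refine le_trans ?_ (mul_le_mul_of_nonneg_left h (by norm_num))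
  nlinarith [sq_nonneg (x u - 2 * x w1), sq_nonneg (x u - 2 * x w2), sq_nonneg (2 * x u + x v)]

lemma caseA2 (S : Finset (Sym2 V)) (u v w1 w2 w : V) (h12 : w1 ≠ w2) (hu1 : u ≠ w1)
    (hu2 : u ≠ w2)
    (huv : u ≠ v) (hv1 : v ≠ w1) (hv2 : v ≠ w2) (hwv : v ≠ w) (hwu : u ≠ w)
    (m1 : s(u, w1) ∈ S) (m2 : s(u, w2) ∈ S) (m3 : s(v, w) ∈ S)
    (x : V → ℝ) : (x u - x v) ^ 2 ≤ 7 / 6 * En S x := by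
  have hsub : ({s(u, w1), s(u, w2), s(v, w)} : Finset (Sym2 V)) ⊆ S := by
    intro e he; simp only [Finset.mem_insert, Finset.mem_singleton] at he
    rcases he with rfl | rfl | rfl <;> assumption
  have hsum : ∑ e ∈ ({s(u, w1), s(u, w2), s(v, w)} : Finset (Sym2 V)), eQ x e
      = (x u - x w1) ^ 2 + ((x u - x w2) ^ 2 + (x v - x w) ^ 2) := by
    rw [Finset.sum_insert (by
      simp only [Finset.mem_insert, Finset.mem_singleton, Sym2.eq_iff]; grind),
      Finset.sum_insert (by
      simp only [Finset.mem_singleton, Sym2.eq_iff]; grind), Finset.sum_singleton]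
    simp only [eQ_mk]
  by_cases hw : w = w1 ∨ w = w2
  · have h := En_ge S _ {u, v, w1, w2} hsub x
    rw [hsum, Finset.sum_insert (by simp [*]), Finset.sum_insert (by simp [*]),
      Finset.sum_insert (by simp [*]), Finset.sum_singleton] at h
    refine le_trans ?_ (mul_le_mul_of_nonneg_left h (by norm_num))
    rcases hw with rfl | rfl
    · nlinarith [sq_nonneg (x u - 2 * x w2), sq_nonneg (x u + x v), sq_nonneg (x u + x v - x w),
        sq_nonneg (x u + x v - 2 * x w), sq_nonneg (x u + x v - 3 * x w), sq_nonneg (x u), sq_nonneg (x v), sq_nonneg (x w)]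
    · nlinarith [sq_nonneg (x u - 2 * x w1), sq_nonneg (x u + x v), sq_nonneg (x u + x v - x w),
        sq_nonneg (x u + x v - 2 * x w), sq_nonneg (x u + x v - 3 * x w), sq_nonneg (x u), sq_nonneg (x v), sq_nonneg (x w)]
  · push Not at hw
    obtain ⟨hw1, hw2⟩ := hw
    have h := En_ge S _ {u, v, w1, w2, w} hsub x
    rw [hsum, Finset.sum_insert (by simp [*]), Finset.sum_insert (by simp [*]),
      Finset.sum_insert (by simp [*, hw1.symm]), Finset.sum_insert (by simp [*, hw2.symm]),
      Finset.sum_singleton] at h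
    refine le_trans ?_ (mul_le_mul_of_nonneg_left h (by norm_num))
    nlinarith [sq_nonneg (x u - 2 * x w1), sq_nonneg (x u - 2 * x w2),
      sq_nonneg (x v - 2 * x w), sq_nonneg (4 * x u + 3 * x v)]

def IsInt (Q : Finset (Sym2 V)) (u : V) : Prop :=
  ∃ w1 w2, w1 ≠ w2 ∧ s(u, w1) ∈ Q ∧ s(u, w2) ∈ Q

lemma ne_of_mem {S : Finset (Sym2 V)} (hS : ∀ e ∈ S, ¬ e.IsDiag) {a b : V} (h : s(a, b) ∈ S) :
    a ≠ b := by
  have := hS _ h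
  simpa using this

lemma step_int1 (S : Finset (Sym2 V)) (hS : ∀ e ∈ S, ¬ e.IsDiag) (u v : V) (huv : u ≠ v)
    (hn : s(u, v) ∉ S) (hu : IsInt S u) :
    gS (insert s(u, v) S) ≤ gS S * (√5 / 2) := by
  obtain ⟨w1, w2, h12, m1, m2⟩ := hu
  have := gS_step S u v hn (3 / 2) (by norm_num) (fun x =>
    caseA1 S u v w1 w2 h12 (ne_of_mem hS m1) (ne_of_mem hS m2) huv
      (by rintro rfl; exact hn m1) (by rintro rfl; exact hn m2) m1 m2 x)
  refine this.trans (le_of_eq ?_)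
  congr 1
  have s2 := sqrt5_sq
  have s0 := sqrt5_lb
  rw [div_eq_div_iff (by linarith) (by norm_num)]
  linarith

lemma step_int2 (S : Finset (Sym2 V)) (hS : ∀ e ∈ S, ¬ e.IsDiag) (u v : V) (huv : u ≠ v)
    (hn : s(u, v) ∉ S) (hu : IsInt S u) (hv : ∃ w, s(v, w) ∈ S) :
    gS (insert s(u, v) S) ≤ gS S := by
  obtain ⟨w1, w2, h12, m1, m2⟩ := hu
  obtain ⟨w, m3⟩ := hv
  have := gS_step S u v hn (7 / 6) (by norm_num) (fun x =>
    caseA2 S u v w1 w2 w h12 (ne_of_mem hS m1) (ne_of_mem hS m2) huv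
      (by rintro rfl; exact hn m1) (by rintro rfl; exact hn m2) (ne_of_mem hS m3)
      (by rintro rfl; exact hn (by rw [Sym2.eq_swap]; exact m3)) m1 m2 m3 x)
  refine this.trans (mul_le_of_le_one_right (gS_pos S).le ?_)
  have s0 := sqrt5_lb
  rw [div_le_one (by linarith)]
  linarith

open Classical in
lemma extras (Q P : Finset (Sym2 V)) (hQP : Q ⊆ P) (hP : ∀ e ∈ P, ¬ e.IsDiag) (Z : Finset V)
    (hZ : ∀ v, v ∉ Z → ∃ w, s(v, w) ∈ Q)
    (hc : ∀ u v, s(u, v) ∈ P → s(u, v) ∉ Q → IsInt Q u ∨ IsInt Q v ∨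
      ∀ S, Q ⊆ S → ∀ x : V → ℝ, (x u - x v) ^ 2 ≤ (√5 - 1) * En S x) (T : Finset (Sym2 V)) :
    T ⊆ P → gS (Q ∪ T) ≤
      gS Q * (√5 / 2) ^ (Z.filter (fun v => ∃ w, s(v, w) ∈ Q ∪ T)).card := by
  have s0 := sqrt5_lb
  induction T using Finset.induction_on with
  | empty =>
    intro _
    rw [Finset.union_empty]
    apply le_mul_of_one_le_right (gS_pos Q).le
    apply one_le_pow₀; linarith
  | insert e T he ih =>
    intro hT
    have hTP : T ⊆ P := fun f hf => hT (Finset.mem_insert_of_mem hf)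
    have ih := ih hTP
    have heP : e ∈ P := hT (Finset.mem_insert_self _ _)
    rw [Finset.union_insert]
    set S := Q ∪ T with hSdef
    have hSP : S ⊆ P := Finset.union_subset hQP hTP
    have hS : ∀ e ∈ S, ¬ e.IsDiag := fun e h => hP e (hSP h)
    have hQS : Q ⊆ S := Finset.subset_union_left
    by_cases heS : e ∈ S
    · rw [Finset.insert_eq_of_mem heS]; exact ih
    have hmono : (Z.filter (fun v => ∃ w, s(v, w) ∈ S)) ⊆
        (Z.filter (fun v => ∃ w, s(v, w) ∈ insert e S)) := by
      intro v hv
      simp only [Finset.mem_filter] at hv ⊢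
      obtain ⟨h1, w, h2⟩ := hv
      exact ⟨h1, w, Finset.mem_insert_of_mem h2⟩
    have hle : gS Q * (√5 / 2) ^ (Z.filter (fun v => ∃ w, s(v, w) ∈ S)).card ≤
        gS Q * (√5 / 2) ^ (Z.filter (fun v => ∃ w, s(v, w) ∈ insert e S)).card := by
      apply mul_le_mul_of_nonneg_left _ (gS_pos Q).le
      exact pow_le_pow_right₀ (by linarith) (Finset.card_le_card hmono)
    have main : ∀ u v, e = s(u, v) → IsInt Q u → gS (insert e S) ≤
        gS Q * (√5 / 2) ^ (Z.filter (fun v => ∃ w, s(v, w) ∈ insert e S)).card := by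
      rintro u v rfl ⟨w1, w2, h12, m1, m2⟩
      have hu : IsInt S u := ⟨w1, w2, h12, hQS m1, hQS m2⟩
      have huv : u ≠ v := ne_of_mem hP heP
      by_cases hv : ∃ w, s(v, w) ∈ S
      · exact (step_int2 S hS u v huv heS hu hv).trans (ih.trans hle)
      · refine (step_int1 S hS u v huv heS hu).trans ?_
        have hvZ : v ∈ Z := by
          by_contra hvZ
          obtain ⟨w, hw⟩ := hZ v hvZ
          exact hv ⟨w, hQS hw⟩
        have hcard : (Z.filter (fun v => ∃ w, s(v, w) ∈ S)).card + 1 ≤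
          (Z.filter (fun t => ∃ w, s(t, w) ∈ insert s(u, v) S)).card := by
          apply Finset.card_lt_card
          refine ⟨hmono, fun hh => ?_⟩
          have : v ∈ (Z.filter (fun t => ∃ w, s(t, w) ∈ insert s(u, v) S)) := by
            simp only [Finset.mem_filter]
            exact ⟨hvZ, u, by rw [Sym2.eq_swap]; exact Finset.mem_insert_self _ _⟩
          have := hh this
          simp only [Finset.mem_filter] at this
          exact hv this.2
        calc gS S * (√5 / 2) ≤ (gS Q * (√5 / 2) ^ (Z.filter (fun v => ∃ w, s(v, w) ∈ S)).card)
              * (√5 / 2) := by gcongr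
          _ = gS Q * (√5 / 2) ^ ((Z.filter (fun v => ∃ w, s(v, w) ∈ S)).card + 1) := by
              rw [pow_succ]; ring
          _ ≤ _ := by
              apply mul_le_mul_of_nonneg_left _ (gS_pos Q).le
              exact pow_le_pow_right₀ (by linarith) hcard
    induction e using Sym2.ind with
    | _ u v =>
      rcases hc u v heP (fun h => heS (hQS h)) with h | h | h
      · exact main u v rfl h
      · exact main v u Sym2.eq_swap h
      · refine le_trans ?_ (ih.trans hle)
        have := gS_step S u v heS (√5 - 1) (by linarith) (h S hQS)
        refine this.trans (le_of_eq ?_)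
        rw [show 1 + (√5 - 1) = √5 by ring, div_self (by linarith), mul_one]

lemma extras' (Q P : Finset (Sym2 V)) (hQP : Q ⊆ P) (hP : ∀ e ∈ P, ¬ e.IsDiag) (Z : Finset V)
    (hZ : ∀ v, v ∉ Z → ∃ w, s(v, w) ∈ Q)
    (hc : ∀ u v, s(u, v) ∈ P → s(u, v) ∉ Q → IsInt Q u ∨ IsInt Q v ∨
      ∀ S, Q ⊆ S → ∀ x : V → ℝ, (x u - x v) ^ 2 ≤ (√5 - 1) * En S x) :
    gS P ≤ gS Q * (√5 / 2) ^ Z.card := by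
  classical
  have hex := extras Q P hQP hP Z hZ hc P (Finset.Subset.refl P)
  rw [Finset.union_eq_right.2 hQP] at hex
  refine hex.trans ?_
  have s0 := sqrt5_lb
  apply mul_le_mul_of_nonneg_left _ (gS_pos Q).le
  exact pow_le_pow_right₀ (by linarith) (Finset.card_filter_le _ _)

end PartThree

section PartFour
variable {n : ℕ}

lemma pEd_sub_of_chain (P : Finset (Sym2 (Fin n))) : ∀ l : List (Fin n),
    l.IsChain (fun a b => s(a, b) ∈ P) → pEd l ⊆ P
  | [], _ => by simp [pEd]
  | [a], _ => by simp [pEd]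
  | a :: b :: l, h => by
    rw [List.isChain_cons_cons] at h
    simp only [pEd]
    exact Finset.insert_subset h.1 (pEd_sub_of_chain P (b :: l) h.2)

lemma mem_pEd_mono_mid (a b : Fin n) (t : List (Fin n)) : ∀ s : List (Fin n),
    s(a, b) ∈ pEd (s ++ a :: b :: t)
  | [] => by simp [pEd]
  | [c] => by simp [pEd]
  | c :: d :: s => by
    have := mem_pEd_mono_mid a b t (d :: s)
    simp only [List.cons_append, pEd] at this ⊢
    exact Finset.mem_insert_of_mem this

def IsEnd (l : List (Fin n)) (u : Fin n) : Prop := (∃ t, l = u :: t) ∨ (∃ t, l = t ++ [u])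

lemma end_or_int (l : List (Fin n)) (hl : l.Nodup) (u : Fin n) (hu : u ∈ l) :
    IsEnd l u ∨ IsInt (pEd l) u := by
  obtain ⟨s, t, rfl⟩ := List.append_of_mem hu
  rcases List.eq_nil_or_concat s with rfl | ⟨s', w1, rfl⟩
  · left; left; exact ⟨t, rfl⟩
  rcases t with _ | ⟨w2, t⟩
  · left; right; exact ⟨_, rfl⟩
  right
  refine ⟨w1, w2, ?_, ?_, ?_⟩
  · rintro rfl
    simp [List.nodup_append] at hl
  · have := mem_pEd_mono_mid w1 u (w2 :: t) s'
    rw [Sym2.eq_swap]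
    simpa using this
  · exact mem_pEd_mono_mid u w2 t _

lemma single_or_nbr (l : List (Fin n)) (u : Fin n) (hu : u ∈ l) :
    l.length = 1 ∨ ∃ w, s(u, w) ∈ pEd l := by
  obtain ⟨s, t, rfl⟩ := List.append_of_mem hu
  rcases t with _ | ⟨w2, t⟩
  · rcases List.eq_nil_or_concat s with rfl | ⟨s', w1, rfl⟩
    · left; simp
    · right
      refine ⟨w1, ?_⟩
      have := mem_pEd_mono_mid w1 u [] s'
      rw [Sym2.eq_swap]
      simpa using this
  · right
    exact ⟨w2, mem_pEd_mono_mid u w2 t _⟩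

lemma chain_rev (P : Finset (Sym2 (Fin n))) (l : List (Fin n))
    (h : l.IsChain (fun a b => s(a, b) ∈ P)) : l.reverse.IsChain (fun a b => s(a, b) ∈ P) := by
  rw [List.isChain_reverse]
  convert h using 3
  rw [Sym2.eq_swap]

lemma norm_last (P : Finset (Sym2 (Fin n))) (l : List (Fin n)) (u : Fin n)
    (h : l.IsChain (fun a b => s(a, b) ∈ P)) (hu : IsEnd l u) :
    ∃ t, (t ++ [u]).Perm l ∧ (t ++ [u]).IsChain (fun a b => s(a, b) ∈ P) := by
  rcases hu with ⟨t, rfl⟩ | ⟨t, rfl⟩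
  · refine ⟨t.reverse, ?_, ?_⟩
    · rw [← List.reverse_cons]; exact List.reverse_perm _
    · rw [← List.reverse_cons]; exact chain_rev P _ h
  · exact ⟨t, List.Perm.refl _, h⟩

lemma norm_head (P : Finset (Sym2 (Fin n))) (l : List (Fin n)) (u : Fin n)
    (h : l.IsChain (fun a b => s(a, b) ∈ P)) (hu : IsEnd l u) :
    ∃ t, (u :: t).Perm l ∧ (u :: t).IsChain (fun a b => s(a, b) ∈ P) := by
  obtain ⟨t, h1, h2⟩ := norm_last P l u h hu
  refine ⟨t.reverse, ?_, ?_⟩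
  · refine List.Perm.trans ?_ h1
    rw [show u :: t.reverse = (t ++ [u]).reverse by simp]
    exact List.reverse_perm _
  · rw [show u :: t.reverse = (t ++ [u]).reverse by simp]
    exact chain_rev P _ h2

lemma cover_perm (P : Finset (Sym2 (Fin n))) (Ps Ps' : List (List (Fin n))) (hp : Ps.Perm Ps')
    (h : IsPathCoverOf n P Ps) : IsPathCoverOf n P Ps' := by
  obtain ⟨h1, h2, h3⟩ := h
  refine ⟨fun l hl => h1 l (hp.mem_iff.2 hl), ?_, ?_⟩
  · exact (hp.pairwise_iff (fun {a b} hab x hx hy => hab x hy hx)).1 h2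
  · intro v
    obtain ⟨l, hl, hv⟩ := h3 v
    exact ⟨l, hp.mem_iff.1 hl, hv⟩

lemma join_lt (P : Finset (Sym2 (Fin n))) (Ps : List (List (Fin n))) (h : IsPathCoverOf n P Ps)
    (l1 l2 : List (Fin n)) (m1 : l1 ∈ Ps) (m2 : l2 ∈ Ps) (hne : l1 ≠ l2) (u v : Fin n)
    (hu : IsEnd l1 u) (hv : IsEnd l2 v) (huv : s(u, v) ∈ P) :
    ∃ Ps', IsPathCoverOf n P Ps' ∧ Ps'.length < Ps.length := by
  have m2' : l2 ∈ Ps.erase l1 := (List.mem_erase_of_ne hne.symm).2 m2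
  have hperm : Ps.Perm (l1 :: l2 :: (Ps.erase l1).erase l2) :=
    (List.perm_cons_erase m1).trans ((List.perm_cons_erase m2').cons _)
  set R := (Ps.erase l1).erase l2
  have hc := cover_perm P _ _ hperm h
  obtain ⟨c1, c2, c3⟩ := hc
  obtain ⟨_, n1, ch1⟩ := c1 l1 (by simp)
  obtain ⟨_, n2, ch2⟩ := c1 l2 (by simp)
  obtain ⟨t1, p1, k1⟩ := norm_last P l1 u ch1 hu
  obtain ⟨t2, p2, k2⟩ := norm_head P l2 v ch2 hv
  rw [List.pairwise_cons, List.pairwise_cons] at c2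
  obtain ⟨d1, d2, d3⟩ := c2
  refine ⟨((t1 ++ [u]) ++ (v :: t2)) :: R, ⟨?_, ?_, ?_⟩, ?_⟩
  · intro l hl
    rcases List.mem_cons.1 hl with rfl | hl
    · refine ⟨by simp, ?_, ?_⟩
      · rw [List.nodup_append]
        refine ⟨p1.nodup_iff.2 n1, p2.nodup_iff.2 n2, ?_⟩
        intro a ha b hb hab
        subst hab
        exact d1 l2 (by simp) a (p1.mem_iff.1 ha) (p2.mem_iff.1 hb)
      · change List.IsChain _ _
        rw [List.isChain_append]
        refine ⟨k1, k2, ?_⟩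
        intro x hx y hy
        simp at hx hy
        subst hx hy
        exact huv
    · exact c1 l (by simp [hl])
  · rw [List.pairwise_cons]
    refine ⟨?_, d3⟩
    intro l hl x hx
    rcases List.mem_append.1 hx with hx | hx
    · exact d1 l (by simp [hl]) x (p1.mem_iff.1 hx)
    · exact d2 l hl x (p2.mem_iff.1 hx)
  · intro w
    obtain ⟨l, hl, hw⟩ := c3 w
    rcases List.mem_cons.1 hl with rfl | hl
    · exact ⟨_, List.mem_cons_self, List.mem_append.2 (Or.inl (p1.mem_iff.2 hw))⟩
    rcases List.mem_cons.1 hl with rfl | hl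
    · exact ⟨_, List.mem_cons_self, List.mem_append.2 (Or.inr (p2.mem_iff.2 hw))⟩
    · exact ⟨l, List.mem_cons_of_mem _ hl, hw⟩
  · rw [hperm.length_eq]; simp

lemma exists_cover (P : Finset (Sym2 (Fin n))) : ∃ Ps, IsPathCoverOf n P Ps := by
  refine ⟨(List.finRange n).map (fun v => [v]), ?_, ?_, ?_⟩
  · intro l hl
    simp only [List.mem_map] at hl
    obtain ⟨v, _, rfl⟩ := hl
    refine ⟨by simp, by simp, ?_⟩
    change List.IsChain _ _
    simp
  · rw [List.pairwise_map]
    refine (List.nodup_finRange n).imp ?_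
    intro a b hab x hx hy
    simp at hx hy
    exact hab (hx.symm.trans hy)
  · intro v
    exact ⟨[v], by simp, by simp⟩

lemma exists_min_cover (P : Finset (Sym2 (Fin n))) : ∃ Ps, IsPathCoverOf n P Ps ∧
    ∀ Ps', IsPathCoverOf n P Ps' → Ps.length ≤ Ps'.length := by
  classical
  have hex : ∃ k, ∃ Ps, IsPathCoverOf n P Ps ∧ Ps.length = k := by
    obtain ⟨Ps, h⟩ := exists_cover P
    exact ⟨_, Ps, h, rfl⟩
  obtain ⟨Ps, h, hl⟩ := Nat.find_spec hex
  refine ⟨Ps, h, fun Ps' h' => ?_⟩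
  rw [hl]
  exact Nat.find_min' hex ⟨Ps', h', rfl⟩

lemma cover_length (P : Finset (Sym2 (Fin n))) (Ps : List (List (Fin n)))
    (h : IsPathCoverOf n P Ps) : (Ps.map List.length).sum = n := by
  obtain ⟨h1, h2, h3⟩ := h
  have hn : Ps.flatten.Nodup := by
    rw [List.nodup_flatten]
    refine ⟨fun l hl => (h1 l hl).2.1, h2.imp ?_⟩
    intro a b hab x hx hy
    exact hab x hx hy
  rw [← List.length_flatten, ← List.toFinset_card_of_nodup hn]
  have : Ps.flatten.toFinset = Finset.univ := by
    ext v
    obtain ⟨l, hl, hv⟩ := h3 v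
    simp only [List.mem_toFinset, List.mem_flatten, Finset.mem_univ, iff_true]
    exact ⟨l, hl, hv⟩
  rw [this]; simp

lemma singles_card : ∀ (Ps : List (List (Fin n))),
    (Ps.filter (fun l => l.length = 1)).flatten.length
      = (Ps.map (fun l => if l.length = 1 then 1 else 0)).sum
  | [] => by simp
  | l :: Ps => by
    have ih := singles_card Ps
    by_cases h : l.length = 1
    · simp only [List.filter_cons, h, decide_true, if_true, List.flatten_cons, List.length_append,
        ih, List.map_cons, List.sum_cons]
    · simp only [List.filter_cons, h, decide_false, if_false, List.map_cons, List.sum_cons]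
      simp [ih]

lemma prod_pow_sum (s : ℝ) (f : List (Fin n) → ℕ) : ∀ (Ps : List (List (Fin n))),
    s ^ (Ps.map f).sum = (Ps.map fun l => s ^ f l).prod
  | [] => by simp
  | l :: Ps => by simp [pow_add, prod_pow_sum s f Ps]

lemma main_upper (P : Finset (Sym2 (Fin n))) (hP : ∀ e ∈ P, ¬ e.IsDiag) :
    ∃ Ps, IsPathCoverOf n P Ps ∧ gS P ≤
      (Ps.map fun l => (Nat.fib (2 * l.length) : ℝ) / √5 ^ (l.length - 1)).prod *
      (√5 / 2) ^ (Ps.map (fun l => if l.length = 1 then 1 else 0)).sum := by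
  classical
  obtain ⟨Ps, h, hmin⟩ := exists_min_cover P
  refine ⟨Ps, h, ?_⟩
  have h' := h
  obtain ⟨h1, h2, h3⟩ := h'
  set Q := psEd Ps with hQ
  have hQP : Q ⊆ P := psEd_sub P Ps fun l hl => pEd_sub_of_chain P l (h1 l hl).2.2
  set Z := (Ps.filter (fun l => l.length = 1)).flatten.toFinset with hZdef
  have hZ : ∀ v, v ∉ Z → ∃ w, s(v, w) ∈ Q := by
    intro v hv
    obtain ⟨l, hl, hvl⟩ := h3 v
    rcases single_or_nbr l v hvl with h | ⟨w, hw⟩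
    · exfalso
      apply hv
      simp only [hZdef, List.mem_toFinset, List.mem_flatten, List.mem_filter, decide_eq_true_eq]
      exact ⟨l, ⟨hl, h⟩, hvl⟩
    · exact ⟨w, pEd_sub_psEd Ps l hl hw⟩
  have hints : ∀ l ∈ Ps, ∀ u, IsInt (pEd l) u → IsInt Q u := by
    rintro l hl u ⟨w1, w2, a, b, c⟩
    exact ⟨w1, w2, a, pEd_sub_psEd Ps l hl b, pEd_sub_psEd Ps l hl c⟩
  have hc : ∀ u v, s(u, v) ∈ P → s(u, v) ∉ Q → IsInt Q u ∨ IsInt Q v ∨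
      ∀ S, Q ⊆ S → ∀ x : Fin n → ℝ, (x u - x v) ^ 2 ≤ (√5 - 1) * En S x := by
    intro u v huv _
    obtain ⟨l1, m1, hu⟩ := h3 u
    obtain ⟨l2, m2, hv⟩ := h3 v
    rcases end_or_int l1 (h1 l1 m1).2.1 u hu with e1 | i1
    swap
    · left; exact hints l1 m1 u i1
    rcases end_or_int l2 (h1 l2 m2).2.1 v hv with e2 | i2
    swap
    · right; left; exact hints l2 m2 v i2
    right; right
    have heq : l1 = l2 := by
      by_contra hne
      obtain ⟨Ps', hc', hlt⟩ := join_lt P Ps h l1 l2 m1 m2 hne u v e1 e2 huv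
      have := hmin Ps' hc'
      omega
    subst heq
    intro S hQS x
    have s0 := sqrt5_lb
    have hE := pE_le S x l1 (h1 l1 m1).2.1 ((pEd_sub_psEd Ps l1 m1).trans hQS)
    have hends := pE_ends x l1 (h1 l1 m1).1
    have hfin : (√5 - 1) * pE x l1 ≤ (√5 - 1) * En S x :=
      mul_le_mul_of_nonneg_left hE (by linarith)
    have hne : u ≠ v := ne_of_mem hP huv
    rcases e1 with ⟨t, ht⟩ | ⟨t, ht⟩ <;> rcases e2 with ⟨t', ht'⟩ | ⟨t', ht'⟩
    · exfalso; rw [ht] at ht'; simp at ht'; exact hne ht'.1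
    · have a1 : l1.head (h1 l1 m1).1 = u := by simp [ht]
      have a2 : l1.getLast (h1 l1 m1).1 = v := by simp [ht']
      rw [a1, a2] at hends
      linarith
    · have a1 : l1.head (h1 l1 m1).1 = v := by simp [ht']
      have a2 : l1.getLast (h1 l1 m1).1 = u := by simp [ht]
      rw [a1, a2] at hends
      nlinarith
    · exfalso
      have a1 : l1.getLast (h1 l1 m1).1 = v := by simp [ht']
      have a2 : l1.getLast (h1 l1 m1).1 = u := by simp [ht]
      exact hne (a2.symm.trans a1)
  have hex := extras' Q P hQP hP Z hZ hc
  refine hex.trans ?_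
  have hg := gS_psEd Ps fun l hl => ⟨(h1 l hl).1, (h1 l hl).2.1⟩
  have s0 := sqrt5_lb
  have hcard : Z.card ≤ (Ps.map (fun l => if l.length = 1 then 1 else 0)).sum := by
    rw [← singles_card]
    exact List.toFinset_card_le _
  apply mul_le_mul hg _ (by positivity) ((gS_pos _).le.trans hg)
  exact pow_le_pow_right₀ (by linarith) hcard

end PartFour

section PartFive

lemma sum_eM {n : ℕ} (P : Finset (Sym2 (Fin n))) (hP : ∀ e ∈ P, ¬ e.IsDiag) (i j : Fin n) :
    (∑ e ∈ P, eM e) i j = if i = j then ∑ k, (if s(i, k) ∈ P then (1 : ℝ) else 0)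
      else -(if s(i, j) ∈ P then (1 : ℝ) else 0) := by
  induction P using Finset.induction_on with
  | empty => simp
  | insert e P he ih =>
    have ih := ih fun e h => hP e (Finset.mem_insert_of_mem h)
    have hd := hP e (Finset.mem_insert_self _ _)
    rw [Finset.sum_insert he, Matrix.add_apply, ih]
    have hsplit : ∀ f : Sym2 (Fin n), (if f ∈ insert e P then (1 : ℝ) else 0)
        = (if f = e then 1 else 0) + (if f ∈ P then 1 else 0) := by
      intro f
      by_cases hf : f = e
      · subst hf; simp [he]
      · simp [hf]
    simp only [hsplit, Finset.sum_add_distrib]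
    induction e using Sym2.ind with
    | _ a b =>
      have hab : a ≠ b := by simpa using hd
      have hsum : ∑ k, (if s(i, k) = s(a, b) then (1 : ℝ) else 0)
          = (if i = a then 1 else 0) + (if i = b then 1 else 0) := by
        by_cases h1 : i = a
        · subst h1
          have : ∀ k, (s(i, k) = s(i, b)) ↔ k = b := by intro k; simp; grind
          simp [this, hab]
        · by_cases h2 : i = b
          · subst h2
            have : ∀ k, (s(i, k) = s(a, i)) ↔ k = a := by
              intro k; rw [Sym2.eq_swap (a := a)]; simp; grind
            simp [this, h1]
          · have : ∀ k, ¬ (s(i, k) = s(a, b)) := by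
              intro k; rw [Sym2.eq_iff]; tauto
            simp [this, h1, h2]
      rw [hsum, eM_mk, vecMulVec_apply]
      simp only [bv, Pi.sub_apply, Pi.single_apply]
      by_cases hij : i = j
      · subst hij
        simp only [if_true]
        split_ifs <;> simp_all
      · simp only [if_neg hij, Sym2.eq_iff]
        by_cases ia : i = a <;> by_cases ib : i = b <;> by_cases ja : j = a <;>
          by_cases jb : j = b <;> simp_all <;> ring

lemma nst_eq {n : ℕ} (P : Finset (Sym2 (Fin n))) (hP : ∀ e ∈ P, ¬ e.IsDiag) :
    nst (starPlusEdges n P) = (AM P).det := by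
  unfold nst
  congr 1
  ext i j
  have hW : ∀ a b : Fin n, starPlusEdges n P a.castSucc b.castSucc
      = if s(a, b) ∈ P then 1 else 0 := by
    intro a b
    have e0 : starW n a.castSucc b.castSucc = 0 := by
      simp [starW, Fin.castSucc_ne_last]
    unfold starPlusEdges
    rw [e0, zero_add]
    congr 1
    simp
  have hL : ∀ a : Fin n, starPlusEdges n P a.castSucc (Fin.last n) = 1 := by
    intro a
    have e0 : starW n a.castSucc (Fin.last n) = 1 := by
      simp [starW, Fin.castSucc_ne_last]
    unfold starPlusEdges
    rw [e0, if_neg]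
    · simp
    · rintro ⟨x, y, _, h, _⟩
      exact Fin.castSucc_ne_last y h.symm
  unfold AM
  rw [Matrix.add_apply, sum_eM P hP, submatrix_apply, lapG]
  by_cases hij : i = j
  · subst hij
    simp only [if_true, Fin.sum_univ_castSucc, hW, hL, Matrix.one_apply_eq]
    ring
  · have : ¬ (i.castSucc = j.castSucc) := by simpa using hij
    simp only [if_neg hij, if_neg this, hW, Matrix.one_apply_ne hij]
    ring

/-- Edge set of the first `k` edges of the leaf path. -/
def fanP (n : ℕ) : ℕ → Finset (Sym2 (Fin n))
  | 0 => ∅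
  | k + 1 => if h : k + 1 < n then insert s(⟨k, by omega⟩, ⟨k + 1, h⟩) (fanP n k) else fanP n k

lemma mem_fanP (n : ℕ) : ∀ (k : ℕ), k < n → ∀ a b : Fin n, s(a, b) ∈ fanP n k ↔
    ((a : ℕ) + 1 = b ∧ (b : ℕ) ≤ k) ∨ ((b : ℕ) + 1 = a ∧ (a : ℕ) ≤ k)
  | 0, _, a, b => by
    simp only [fanP, Finset.notMem_empty, false_iff]
    omega
  | k + 1, h, a, b => by
    simp only [fanP, h, dif_pos, Finset.mem_insert, mem_fanP n k (by omega) a b, Sym2.eq_iff,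
      Fin.ext_iff]
    omega

lemma fanP_nodiag (n k : ℕ) (h : k < n) : ∀ e ∈ fanP n k, ¬ e.IsDiag := by
  intro e
  induction e using Sym2.ind with
  | _ a b =>
    rw [mem_fanP n k h]
    simp only [Sym2.mk_isDiag_iff, Fin.ext_iff]
    omega

lemma fanW_eq (n : ℕ) (hn : 0 < n) : fanW n = starPlusEdges n (fanP n (n - 1)) := by
  funext i j
  unfold fanW starPlusEdges
  congr 1
  apply if_congr _ rfl rfl
  simp only [mem_fanP n (n - 1) (by omega)]
  constructor
  · rintro h
    have hi : (i : ℕ) < n := by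
      rcases h with ⟨h1, h2⟩ | ⟨h1, h2⟩
      · have := j.2; omega
      · have : (i : ℕ) ≠ n := fun h => h2 (Fin.ext (by simpa using h))
        have := i.2; omega
    have hj : (j : ℕ) < n := by
      rcases h with ⟨h1, h2⟩ | ⟨h1, h2⟩
      · have : (j : ℕ) ≠ n := fun h => h2 (Fin.ext (by simpa using h))
        have := j.2; omega
      · have := i.2; omega
    refine ⟨⟨i, hi⟩, ⟨j, hj⟩, by ext; simp, by ext; simp, ?_⟩
    simp only
    omega
  · rintro ⟨a, b, rfl, rfl, h⟩
    simp only [Fin.val_castSucc, ne_eq, Fin.castSucc_ne_last, not_false_eq_true, and_true]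
    omega

lemma sum_fanP (n : ℕ) (X : ℕ → ℝ) : ∀ k, k < n →
    ∑ e ∈ fanP n k, eQ (fun i : Fin n => X i) e ≤ ∑ j ∈ Finset.range k, (X j - X (j + 1)) ^ 2
  | 0, _ => by simp [fanP]
  | k + 1, h => by
    have ih := sum_fanP n X k (by omega)
    have hn : s((⟨k, by omega⟩ : Fin n), ⟨k + 1, h⟩) ∉ fanP n k := by
      rw [mem_fanP n k (by omega)]; simp; omega
    simp only [fanP, h, dif_pos]
    rw [Finset.sum_insert hn, Finset.sum_range_succ]
    simp only [eQ_mk]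
    linarith

open Real goldenRatio

lemma geo_energy (c : ℝ) : ∀ k : ℕ, ∑ j ∈ Finset.range (k + 1), (c * φ ^ (2 * j)) ^ 2 +
    ∑ j ∈ Finset.range k, (c * φ ^ (2 * j) - c * φ ^ (2 * (j + 1))) ^ 2
      ≤ φ * (c * φ ^ (2 * k)) ^ 2
  | 0 => by
    simp
    nlinarith [one_lt_goldenRatio, sq_nonneg c]
  | k + 1 => by
    have ih := geo_energy c k
    rw [Finset.sum_range_succ _ (k + 1),
      Finset.sum_range_succ (fun j => (c * φ ^ (2 * j) - c * φ ^ (2 * (j + 1))) ^ 2) k]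
    have h2 := goldenRatio_sq
    have e : φ ^ (2 * (k + 1)) = φ ^ (2 * k) * (φ + 1) := by
      rw [← h2]; ring
    rw [e]
    set y := c * φ ^ (2 * k)
    have e2 : c * (φ ^ (2 * k) * (φ + 1)) = y * (φ + 1) := by ring
    rw [e2]
    have : (y * (φ + 1)) ^ 2 + (y - y * (φ + 1)) ^ 2 = φ * (y * (φ + 1)) ^ 2 - φ * y ^ 2 := by
      have gen : ∀ t : ℝ, t ^ 2 = t + 1 →
          (y * (t + 1)) ^ 2 + (y - y * (t + 1)) ^ 2 = t * (y * (t + 1)) ^ 2 - t * y ^ 2 := by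
        intro t ht
        linear_combination -(y ^ 2 * (t + 1)) * ht
      exact gen φ h2
    linarith

lemma fan_step (n k : ℕ) (h : k + 1 < n) :
    (AM (fanP n k)).det * φ ^ 2 ≤ (AM (fanP n (k + 1))).det := by
  have hn : s((⟨k, by omega⟩ : Fin n), ⟨k + 1, h⟩) ∉ fanP n k := by
    rw [mem_fanP n k (by omega)]; simp; omega
  have hd := det_pos (fanP n k)
  have e : fanP n (k + 1) = insert s((⟨k, by omega⟩ : Fin n), ⟨k + 1, h⟩) (fanP n k) := by
    simp [fanP, h]
  rw [e, det_insert _ _ _ hn hd]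
  apply mul_le_mul_of_nonneg_left _ hd.le
  rw [goldenRatio_sq]
  have hφ := goldenRatio_pos
  set c : ℝ := φ⁻¹ / φ ^ (2 * k) with hc
  set X : ℕ → ℝ := fun j => if j ≤ k then c * φ ^ (2 * j) else if j = k + 1 then -1 else 0 with hX
  have hR := Rs_ge (fanP n k) ⟨k, by omega⟩ ⟨k + 1, h⟩ hd (fun i => X i)
  have hXk : X k = φ⁻¹ := by
    simp only [hX, le_refl, if_true, hc]
    field_simp
  have hXk1 : X (k + 1) = -1 := by simp [hX]
  simp only [hXk, hXk1] at hR
  have hEn : En (fanP n k) (fun i => X i) ≤ 1 + φ⁻¹ := by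
    unfold En
    have h1 := sum_fanP n X k (by omega)
    have h2 : ∑ v : Fin n, X v ^ 2 = ∑ j ∈ Finset.range (k + 1), X j ^ 2 + 1 := by
      rw [Fin.sum_univ_eq_sum_range (fun j => X j ^ 2) n]
      rw [← Finset.sum_subset (s₁ := Finset.range (k + 2))]
      · rw [Finset.sum_range_succ, hXk1]; norm_num
      · intro j hj; simp at hj ⊢; omega
      · intro j _ hj
        simp only [Finset.mem_range, not_lt] at hj
        have a1 : ¬ j ≤ k := by omega
        have a2 : j ≠ k + 1 := by omega
        simp [hX, a1, a2]
    have g := geo_energy c k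
    have e1 : ∑ j ∈ Finset.range (k + 1), X j ^ 2
        = ∑ j ∈ Finset.range (k + 1), (c * φ ^ (2 * j)) ^ 2 := by
      apply Finset.sum_congr rfl
      intro j hj
      have : j ≤ k := by simp at hj; omega
      simp [hX, this]
    have e2 : ∑ j ∈ Finset.range k, (X j - X (j + 1)) ^ 2
        = ∑ j ∈ Finset.range k, (c * φ ^ (2 * j) - c * φ ^ (2 * (j + 1))) ^ 2 := by
      apply Finset.sum_congr rfl
      intro j hj
      have h3 : j < k := by simpa using hj
      have h4 : j ≤ k := by omega
      have h5 : j + 1 ≤ k := by omega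
      simp only [hX, h4, h5, if_true]
    have e3 : φ * (c * φ ^ (2 * k)) ^ 2 = φ⁻¹ := by
      simp only [hc]; field_simp
    rw [h2]
    linarith
  have hinv : φ⁻¹ = φ - 1 := by
    rw [inv_goldenRatio, ← one_sub_goldenConj]; ring
  rw [hinv] at hR hEn
  linarith

lemma fan_lower (n : ℕ) : ∀ k, k < n → φ ^ (2 * k) ≤ (AM (fanP n k)).det
  | 0, _ => by simp [fanP, AM]
  | k + 1, h => by
    have ih := fan_lower n k (by omega)
    have h1 := fan_step n k h
    have : φ ^ (2 * (k + 1)) = φ ^ (2 * k) * φ ^ 2 := by ring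
    rw [this]
    have h2 : (0 : ℝ) ≤ φ ^ 2 := by positivity
    nlinarith

end PartFive

section PartSix
open Real goldenRatio

lemma phi_log_pos : 0 < Real.log φ := Real.log_pos one_lt_goldenRatio

lemma single_bound (δ : ℝ) (k : ℕ) (hk : 1 ≤ k) :
    √5 ^ k * ((Nat.fib (2 * k) : ℝ) / √5 ^ (k - 1)) * (√5 / 2) ^ (if k = 1 then 1 else 0) ≤
    Real.exp (2 * Real.log φ * k - Real.exp (-(4 * Real.log φ) * (1 + 1 / δ)) *
      (1 - 4 * Real.log φ * (k - 1 / δ))) := by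
  set L := Real.log φ with hL
  have hφ := goldenRatio_pos
  have s0 := sqrt5_lb
  have s1 := sqrt5_ub
  have s2 := sqrt5_sq
  have hexp : Real.exp L = φ := Real.exp_log hφ
  -- tangent line bound
  have htan : Real.exp (-(4 * L) * (1 + 1 / δ)) * (1 - 4 * L * (k - 1 / δ))
      ≤ Real.exp (-(4 * L) * (k + 1)) := by
    have e : -(4 * L) * ((k : ℝ) + 1) = -(4 * L) * (1 + 1 / δ) + (-(4 * L) * (k - 1 / δ)) := by ring
    rw [e, Real.exp_add]
    apply mul_le_mul_of_nonneg_left _ (Real.exp_pos _).le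
    have := Real.add_one_le_exp (-(4 * L) * (k - 1 / δ))
    linarith
  have hmain : √5 ^ k * ((Nat.fib (2 * k) : ℝ) / √5 ^ (k - 1)) * (√5 / 2) ^ (if k = 1 then 1 else 0)
      ≤ Real.exp (2 * L * k - Real.exp (-(4 * L) * (k + 1))) := by
    have e1 : √5 ^ k * ((Nat.fib (2 * k) : ℝ) / √5 ^ (k - 1)) = √5 * Nat.fib (2 * k) := by
      obtain ⟨m, rfl⟩ : ∃ m, k = m + 1 := ⟨k - 1, by omega⟩
      rw [Nat.add_sub_cancel, pow_succ]
      field_simp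
    rw [e1, sub_eq_add_neg, Real.exp_add]
    have hE : Real.exp (2 * L * k) = φ ^ (2 * k) := by
      rw [show 2 * L * (k : ℝ) = ((2 * k : ℕ) : ℝ) * L by push_cast; ring, Real.exp_nat_mul, hexp]
    have hE4 : ∀ m : ℕ, Real.exp (-(4 * L) * m) = (φ ^ (4 * m))⁻¹ := by
      intro m
      rw [show -(4 * L) * (m : ℝ) = -(((4 * m : ℕ) : ℝ) * L) by push_cast; ring, Real.exp_neg,
        Real.exp_nat_mul, hexp]
    rw [hE]
    have hone := Real.add_one_le_exp (-Real.exp (-(4 * L) * ((k : ℝ) + 1)))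
    have hp : (0 : ℝ) < φ ^ (2 * k) := by positivity
    by_cases h1 : k = 1
    · subst h1
      have h8 : Real.exp (-(4 * L) * ((1 : ℕ) + 1)) = (φ ^ 8)⁻¹ := by
        have := hE4 2
        push_cast at this ⊢
        rw [show (1 : ℝ) + 1 = 2 by norm_num]
        simpa using this
      rw [h8] at hone ⊢
      have hphi : (1.618 : ℝ) ≤ φ := by
        unfold Real.goldenRatio; linarith
      have h9 : (φ ^ 8)⁻¹ ≤ (1 / 40 : ℝ) := by
        rw [inv_le_comm₀ (by positivity) (by norm_num)]
        calc (1 / 40 : ℝ)⁻¹ ≤ 1.618 ^ 8 := by norm_num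
          _ ≤ φ ^ 8 := by gcongr
      have h10 : (2.61 : ℝ) ≤ φ ^ (2 * 1) := by
        calc (2.61 : ℝ) ≤ 1.618 ^ (2 * 1) := by norm_num
          _ ≤ _ := by gcongr
      have h11 : (39 / 40 : ℝ) ≤ Real.exp (-(φ ^ 8)⁻¹) := by linarith
      have h12 : √5 * (Nat.fib (2 * 1) : ℝ) * (√5 / 2) ^ (if 1 = 1 then 1 else 0) = 5 / 2 := by
        simp
        nlinarith
      rw [h12]
      calc (5 / 2 : ℝ) ≤ 2.61 * (39 / 40) := by norm_num
        _ ≤ _ := by gcongr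
    · rw [if_neg h1, pow_zero, mul_one]
      have hf : √5 * (Nat.fib (2 * k) : ℝ) = φ ^ (2 * k) * (1 - (φ ^ (4 * k))⁻¹) := by
        rw [coe_fib_eq]
        have hpsi : ψ ^ (2 * k) = (φ ^ (2 * k))⁻¹ := by
          have : ψ = -φ⁻¹ := by rw [inv_goldenRatio]; ring
          rw [this, Even.neg_pow (by simp), inv_pow]
        rw [hpsi]
        have : φ ^ (4 * k) = φ ^ (2 * k) * φ ^ (2 * k) := by rw [← pow_add]; ring_nf
        rw [this]
        have h5 : √5 ≠ 0 := by positivity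
        rw [mul_div_cancel₀ _ h5]
        have := hp.ne'
        field_simp
      rw [hf]
      apply mul_le_mul_of_nonneg_left _ hp.le
      have h3 : Real.exp (-(4 * L) * ((k : ℝ) + 1)) ≤ (φ ^ (4 * k))⁻¹ := by
        rw [← hE4 k]
        apply Real.exp_le_exp.2
        have := phi_log_pos
        nlinarith
      linarith
  refine hmain.trans (Real.exp_le_exp.2 ?_)
  linarith

lemma list_bound {n : ℕ} (δ : ℝ) : ∀ Ps : List (List (Fin n)), (∀ l ∈ Ps, l ≠ []) →
    √5 ^ (Ps.map List.length).sum *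
      ((Ps.map fun l => (Nat.fib (2 * l.length) : ℝ) / √5 ^ (l.length - 1)).prod *
      (√5 / 2) ^ (Ps.map (fun l => if l.length = 1 then 1 else 0)).sum) ≤
    Real.exp (2 * Real.log φ * ((Ps.map List.length).sum : ℕ) -
      Real.exp (-(4 * Real.log φ) * (1 + 1 / δ)) *
      (Ps.length - 4 * Real.log φ * (((Ps.map List.length).sum : ℕ) - Ps.length / δ)))
  | [], _ => by simp
  | l :: Ps, h => by
    have ih := list_bound δ Ps fun m hm => h m (by simp [hm])
    have hs := single_bound δ l.length (List.length_pos_iff.2 (h l (by simp)))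
    simp only [List.map_cons, List.sum_cons, List.prod_cons, List.length_cons, pow_add]
    have key := mul_le_mul hs ih (by
      apply mul_nonneg (by positivity)
      apply mul_nonneg _ (by positivity)
      apply List.prod_nonneg
      intro a ha
      simp only [List.mem_map] at ha
      obtain ⟨m, _, rfl⟩ := ha
      positivity) (Real.exp_pos _).le
    rw [← Real.exp_add] at key
    refine le_trans (le_of_eq ?_) (key.trans (le_of_eq ?_))
    · ring
    · congr 1
      push_cast
      ring

lemma final_upper {n : ℕ} (hn : 1 ≤ n) (δ : ℝ) (hδ : 0 < δ) (P : Finset (Sym2 (Fin n)))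
    (hP : ∀ e ∈ P, ¬ e.IsDiag) (hcard : P.card ≤ n - 1)
    (hcov : ∀ Ps, IsPathCoverOf n P Ps → δ * n ≤ Ps.length) :
    Real.log (AM P).det ≤ 2 * Real.log φ * n -
      Real.exp (-(4 * Real.log φ) * (1 + 1 / δ)) * (δ * n) := by
  obtain ⟨Ps, hc, hg⟩ := main_upper P hP
  have hp := hcov Ps hc
  have hlen := cover_length P Ps hc
  have hb := list_bound δ Ps fun l hl => (hc.1 l hl).1
  rw [hlen] at hb
  set K := Real.exp (-(4 * Real.log φ) * (1 + 1 / δ)) with hK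
  have hKpos : 0 < K := Real.exp_pos _
  have s0 := sqrt5_lb
  rw [Real.log_le_iff_le_exp (det_pos P)]
  have hdet : (AM P).det = √5 ^ P.card * gS P := by
    unfold gS
    field_simp
  rw [hdet]
  calc √5 ^ P.card * gS P ≤ √5 ^ n * gS P := by
        apply mul_le_mul_of_nonneg_right _ (gS_pos P).le
        exact pow_le_pow_right₀ (by linarith) (by omega)
    _ ≤ _ := mul_le_mul_of_nonneg_left hg (by positivity)
    _ ≤ _ := hb
    _ ≤ _ := by
        apply Real.exp_le_exp.2
        have h1 : (n : ℝ) ≤ Ps.length / δ := by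
          rw [le_div_iff₀ hδ]; linarith
        have hL := phi_log_pos
        have h2 : δ * n ≤ Ps.length - 4 * Real.log φ * (n - Ps.length / δ) := by
          have : 4 * Real.log φ * (n - Ps.length / δ) ≤ 0 :=
            mul_nonpos_of_nonneg_of_nonpos (by positivity) (by linarith)
          linarith
        have := mul_le_mul_of_nonneg_left h2 hKpos.le
        linarith

end PartSix

theorem stmt13 (δ : ℝ) (hδ0 : 0 < δ) (hδ1 : δ < 1) :
    ∃ c : ℝ, 0 < c ∧ ∃ N : ℕ, ∀ n : ℕ, N ≤ n →
      ∀ E' : Finset (Sym2 (Fin n)), (∀ e ∈ E', ¬ e.IsDiag) →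
        (¬ ∃ Ps : List (List (Fin n)), IsPathCoverOf n E' Ps ∧ (Ps.length : ℝ) < δ * n) →
        ∀ P : Finset (Sym2 (Fin n)), P ⊆ E' → P.card ≤ n - 1 →
          Real.log (nst (starPlusEdges n P)) ≤ (1 - c) * Real.log (nst (fanW n)) := by
  set L := Real.log Real.goldenRatio with hL
  have hLpos : 0 < L := phi_log_pos
  set K := Real.exp (-(4 * L) * (1 + 1 / δ)) with hK
  have hKpos : 0 < K := Real.exp_pos _
  set c := min (1 / 2) (K * δ / (4 * L)) with hc
  have hcpos : 0 < c := lt_min (by norm_num) (by positivity)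
  have hc1 : c ≤ 1 / 2 := min_le_left _ _
  have hc2 : c * (4 * L) ≤ K * δ := by
    rw [← le_div_iff₀ (by positivity)]; exact min_le_right _ _
  obtain ⟨N, hN⟩ := exists_nat_ge (4 * L / (K * δ))
  refine ⟨c, hcpos, max N 1, ?_⟩
  intro n hn E' hE' hno P hPE hcard
  have hn1 : 1 ≤ n := (le_max_right _ _).trans hn
  have hnN : (N : ℝ) ≤ n := by exact_mod_cast (le_max_left _ _).trans hn
  have hP : ∀ e ∈ P, ¬ e.IsDiag := fun e h => hE' e (hPE h)
  have hup := final_upper hn1 δ hδ0 P hP hcard (by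
    intro Ps hPs
    by_contra hlt
    push Not at hlt
    refine hno ⟨Ps, ⟨fun l hl => ?_, hPs.2.1, hPs.2.2⟩, hlt⟩
    obtain ⟨a, b, d⟩ := hPs.1 l hl
    exact ⟨a, b, List.IsChain.imp (fun _ _ h => hPE h) d⟩)
  have hlow := fan_lower n (n - 1) (by omega)
  rw [nst_eq P hP, fanW_eq n hn1, nst_eq _ (fanP_nodiag n (n - 1) (by omega))]
  have hlow2 : 2 * L * (n - 1) ≤ Real.log (AM (fanP n (n - 1))).det := by
    have := Real.log_le_log (pow_pos Real.goldenRatio_pos _) hlow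
    rw [Real.log_pow] at this
    push_cast [Nat.cast_sub hn1] at this
    linarith
  have h1 : (1 - c) * (2 * L * (n - 1)) ≤ (1 - c) * Real.log (AM (fanP n (n - 1))).det :=
    mul_le_mul_of_nonneg_left hlow2 (by linarith)
  refine hup.trans (le_trans ?_ h1)
  have h2 : 4 * L ≤ K * δ * n := by
    have : 4 * L / (K * δ) ≤ n := hN.trans hnN
    rw [div_le_iff₀ (by positivity)] at this
    linarith
  have h3 : c * (4 * L) * n ≤ K * δ * n := mul_le_mul_of_nonneg_right hc2 (by positivity)
  have h4 : 0 < c * L := by positivity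
  change 2 * L * n - K * (δ * n) ≤ _
  nlinarith
end

section
/- Let G be a connected weighted undirected graph on vertex set V with positive edge weights and Laplacian L, let V₁ be a nonempty proper subset of V and V₂ = V ∖ V₁. Then the block L[V₂,V₂] is invertible, and for the Schur complement SC(L, V₁) = L[V₁,V₁] − L[V₁,V₂] · L[V₂,V₂]^{−1} · L[V₂,V₁] and any two vertices u, v ∈ V₁, the effective resistances agree: for any vector x solving L x = e_u − e_v and any vector y solving SC(L,V₁) y = ê_u − ê_v (where ê denotes standard basis vectors indexed by V₁), one has (e_u − e_v)ᵀ x = (ê_u − ê_v)ᵀ y. -/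
open Matrix

theorem lapG_mulVec {V : Type*} [Fintype V] [DecidableEq V] (W : V → V → ℝ)
    (hdiag : ∀ i, W i i = 0) (x : V → ℝ) (i : V) :
    (lapG W).mulVec x i = ∑ j, W i j * (x i - x j) := by
  have h : ∀ j, lapG W i j * x j = (if i = j then (∑ k, W i k) * x i else 0) - W i j * x j := by
    intro j
    unfold lapG
    by_cases hij : i = j
    · subst hij
      simp [hdiag]
    · simp [hij]
  simp only [Matrix.mulVec, dotProduct, h, Finset.sum_sub_distrib, mul_sub]
  simp [Finset.sum_mul]

theorem lapG_energy {V : Type*} [Fintype V] [DecidableEq V] (W : V → V → ℝ)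
    (hsym : ∀ i j, W i j = W j i) (hdiag : ∀ i, W i i = 0) (x : V → ℝ) :
    2 * (x ⬝ᵥ (lapG W).mulVec x) = ∑ i, ∑ j, W i j * (x i - x j) ^ 2 := by
  have h1 : x ⬝ᵥ (lapG W).mulVec x = ∑ i, ∑ j, x i * (W i j * (x i - x j)) := by
    simp only [dotProduct, lapG_mulVec W hdiag, Finset.mul_sum]
  have h2 : x ⬝ᵥ (lapG W).mulVec x = ∑ i, ∑ j, x j * (W i j * (x j - x i)) := by
    rw [h1, Finset.sum_comm]
    refine Finset.sum_congr rfl fun i _ => Finset.sum_congr rfl fun j _ => ?_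
    rw [hsym j i]
  rw [two_mul]
  nth_rewrite 1 [h1]
  rw [h2, ← Finset.sum_add_distrib]
  refine Finset.sum_congr rfl fun i _ => ?_
  rw [← Finset.sum_add_distrib]
  refine Finset.sum_congr rfl fun j _ => ?_
  ring

theorem lapG_const {V : Type*} [Fintype V] [DecidableEq V] (W : V → V → ℝ)
    (hsym : ∀ i j, W i j = W j i) (hdiag : ∀ i, W i i = 0) (hnonneg : ∀ i j, 0 ≤ W i j)
    (hconn : (SimpleGraph.fromRel (fun i j => W i j ≠ 0)).Connected) (x : V → ℝ)
    (hx : x ⬝ᵥ (lapG W).mulVec x = 0) (a b : V) : x a = x b := by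
  have he := lapG_energy W hsym hdiag x
  rw [hx, mul_zero] at he
  have hnn : ∀ i j, 0 ≤ W i j * (x i - x j) ^ 2 := fun i j =>
    mul_nonneg (hnonneg i j) (sq_nonneg _)
  have hz : ∀ i j, W i j * (x i - x j) ^ 2 = 0 := by
    intro i j
    have h1 := (Finset.sum_eq_zero_iff_of_nonneg
      (fun i _ => Finset.sum_nonneg fun j _ => hnn i j)).1 he.symm i (Finset.mem_univ i)
    exact (Finset.sum_eq_zero_iff_of_nonneg (fun j _ => hnn i j)).1 h1 j (Finset.mem_univ j)
  have hw : ∀ i j, W i j ≠ 0 → x i = x j := by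
    intro i j h
    have := (mul_eq_zero.1 (hz i j)).resolve_left h
    exact sub_eq_zero.1 (pow_eq_zero_iff two_ne_zero |>.1 this)
  obtain ⟨p⟩ := hconn.preconnected a b
  induction p with
  | nil => rfl
  | cons h p ih =>
    refine Eq.trans ?_ ih
    rw [SimpleGraph.fromRel_adj] at h
    rcases h.2 with h | h
    · exact hw _ _ h
    · exact (hw _ _ h).symm

theorem stmt17 (α β : Type*) [Fintype α] [Fintype β] [DecidableEq α] [DecidableEq β]
    [Nonempty α] [Nonempty β]
    (W : (α ⊕ β) → (α ⊕ β) → ℝ)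
    (hsym : ∀ i j, W i j = W j i) (hdiag : ∀ i, W i i = 0) (hnonneg : ∀ i j, 0 ≤ W i j)
    (hconn : (SimpleGraph.fromRel (fun i j => W i j ≠ 0)).Connected) :
    IsUnit (lapG W).toBlocks₂₂ ∧
      ∀ u v : α, ∀ x : (α ⊕ β) → ℝ, ∀ y : α → ℝ,
        (lapG W).mulVec x = Pi.single (Sum.inl u) 1 - Pi.single (Sum.inl v) 1 →
        ((lapG W).toBlocks₁₁ -
            (lapG W).toBlocks₁₂ * ((lapG W).toBlocks₂₂)⁻¹ * (lapG W).toBlocks₂₁).mulVec y =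
          Pi.single u 1 - Pi.single v 1 →
        (Pi.single (Sum.inl u) 1 - Pi.single (Sum.inl v) 1) ⬝ᵥ x =
          (Pi.single u 1 - Pi.single v 1) ⬝ᵥ y := by
  set L := lapG W with hL
  have hLs : Lᵀ = L := by
    ext i j
    simp only [hL, lapG, Matrix.transpose_apply]
    by_cases h : i = j
    · subst h; rfl
    · rw [if_neg h, if_neg (Ne.symm h), hsym]
  have hmul : ∀ (p : α → ℝ) (q : β → ℝ), L.mulVec (Sum.elim p q) =
      Sum.elim (L.toBlocks₁₁.mulVec p + L.toBlocks₁₂.mulVec q)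
        (L.toBlocks₂₁.mulVec p + L.toBlocks₂₂.mulVec q) := by
    intro p q
    conv_lhs => rw [← Matrix.fromBlocks_toBlocks L]
    rw [Matrix.fromBlocks_mulVec]
    rfl
  have hU : IsUnit L.toBlocks₂₂ := by
    rw [← Matrix.mulVec_injective_iff_isUnit]
    have key : ∀ z : β → ℝ, L.toBlocks₂₂.mulVec z = 0 → z = 0 := by
      intro z hz
      have h0 : (Sum.elim (0 : α → ℝ) z) ⬝ᵥ L.mulVec (Sum.elim 0 z) = 0 := by
        rw [hmul, hz]
        simp [dotProduct]
      funext b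
      obtain ⟨a⟩ := ‹Nonempty α›
      have := lapG_const W hsym hdiag hnonneg hconn _ h0 (Sum.inr b) (Sum.inl a)
      simpa using this
    intro z w h
    have h' : L.toBlocks₂₂.mulVec z = L.toBlocks₂₂.mulVec w := h
    exact sub_eq_zero.1 (key (z - w) (by rw [Matrix.mulVec_sub, h', sub_self]))
  refine ⟨hU, ?_⟩
  intro u v x y hx hy
  set q : β → ℝ := -((L.toBlocks₂₂)⁻¹.mulVec (L.toBlocks₂₁.mulVec y)) with hq
  have hxy : L.mulVec (Sum.elim y q) = Pi.single (Sum.inl u) 1 - Pi.single (Sum.inl v) 1 := by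
    have e1 : L.toBlocks₁₁.mulVec y + L.toBlocks₁₂.mulVec q = Pi.single u 1 - Pi.single v 1 := by
      rw [← hy, hq, Matrix.sub_mulVec, Matrix.mulVec_neg, sub_eq_add_neg,
        Matrix.mulVec_mulVec, Matrix.mulVec_mulVec, Matrix.mul_assoc]
    have e2 : L.toBlocks₂₁.mulVec y + L.toBlocks₂₂.mulVec q = 0 := by
      rw [hq, Matrix.mulVec_neg, Matrix.mulVec_mulVec,
        Matrix.mul_nonsing_inv _ ((Matrix.isUnit_iff_isUnit_det _).1 hU), Matrix.one_mulVec,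
        add_neg_cancel]
    rw [hmul, e1, e2]
    funext i
    rcases i with i | i <;> simp [Pi.single_apply]
  have hswap : L.mulVec (Sum.elim y q) ⬝ᵥ x = Sum.elim y q ⬝ᵥ L.mulVec x := by
    rw [Matrix.dotProduct_mulVec, ← Matrix.mulVec_transpose, hLs]
  rw [hxy, hx] at hswap
  rw [hswap]
  simp [sub_dotProduct, dotProduct_sub]
end

section
/- Let A and B be real symmetric positive semidefinite n×n matrices and let 0 < ε ≤ 1/2 satisfy (1 − ε)·A ≼ B ≼ (1 + ε)·A in the Loewner order (i.e., (1−ε)·xᵀAx ≤ xᵀBx ≤ (1+ε)·xᵀAx for all vectors x). Then for every vector b in the column space of A, b is also in the column space of B, and for any vectors x, y with A x = b and B y = b, it holds that (1 − 2ε)·bᵀx ≤ bᵀy ≤ (1 + 2ε)·bᵀx. -/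
open Matrix

lemma symm_dot {n : ℕ} {A : Matrix (Fin n) (Fin n) ℝ} (hA : A.PosSemidef) (x y : Fin n → ℝ) :
    x ⬝ᵥ A.mulVec y = y ⬝ᵥ A.mulVec x := by
  have h : Aᵀ = A := by simpa using hA.1.eq
  rw [dotProduct_mulVec, ← mulVec_transpose, h, dotProduct_comm]

lemma psd_dot {n : ℕ} {A : Matrix (Fin n) (Fin n) ℝ} (hA : A.PosSemidef) (x : Fin n → ℝ) :
    0 ≤ x ⬝ᵥ A.mulVec x := by
  simpa using hA.dotProduct_mulVec_nonneg x

lemma quad_dot {n : ℕ} {A : Matrix (Fin n) (Fin n) ℝ} (hA : A.PosSemidef) (x y : Fin n → ℝ)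
    (t : ℝ) : 0 ≤ t ^ 2 * (y ⬝ᵥ A.mulVec y) - 2 * t * (x ⬝ᵥ A.mulVec y) + x ⬝ᵥ A.mulVec x := by
  have h := psd_dot hA (t • y - x)
  simp only [mulVec_sub, mulVec_smul, sub_dotProduct, dotProduct_sub, smul_dotProduct,
    dotProduct_smul, smul_eq_mul, symm_dot hA y x] at h
  linarith

theorem stmt18 (n : ℕ) (A B : Matrix (Fin n) (Fin n) ℝ)
    (hA : A.PosSemidef) (hB : B.PosSemidef)
    (ε : ℝ) (hε0 : 0 < ε) (hε : ε ≤ 1 / 2)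
    (h1 : ∀ x : Fin n → ℝ, (1 - ε) * (x ⬝ᵥ A.mulVec x) ≤ x ⬝ᵥ B.mulVec x)
    (h2 : ∀ x : Fin n → ℝ, x ⬝ᵥ B.mulVec x ≤ (1 + ε) * (x ⬝ᵥ A.mulVec x)) :
    ∀ b : Fin n → ℝ, (∃ z : Fin n → ℝ, A.mulVec z = b) →
      (∃ y : Fin n → ℝ, B.mulVec y = b) ∧
        ∀ x y : Fin n → ℝ, A.mulVec x = b → B.mulVec y = b →
          (1 - 2 * ε) * (b ⬝ᵥ x) ≤ b ⬝ᵥ y ∧ b ⬝ᵥ y ≤ (1 + 2 * ε) * (b ⬝ᵥ x) := by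
  rintro b ⟨z, hz⟩
  constructor
  · by_contra hb
    have hb' : b ∉ LinearMap.range B.mulVecLin := by
      rintro ⟨y, hy⟩
      exact hb ⟨y, by simpa using hy⟩
    obtain ⟨f, hf, hker⟩ := Submodule.exists_le_ker_of_notMem hb'
    obtain ⟨w, rfl⟩ := (dotProductEquiv ℝ (Fin n)).surjective f
    have hwB : w ⬝ᵥ B.mulVec w = 0 := by
      have := hker (LinearMap.mem_range_self B.mulVecLin w)
      simpa using this
    have hwA : w ⬝ᵥ A.mulVec w = 0 := by
      have := h1 w
      have := psd_dot hA w
      nlinarith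
    have hAw : A.mulVec w = 0 := (hA.dotProduct_mulVec_zero_iff w).1 (by simpa using hwA)
    apply hf
    have : w ⬝ᵥ b = 0 := by rw [← hz, symm_dot hA, hAw, dotProduct_zero]
    simpa using this
  · intro x y hx hy
    have q1 := quad_dot hB x y (1 + ε)
    have q2 := quad_dot hA y x 1
    have q3 := quad_dot hA x y (1 - ε)
    have ax := psd_dot hA x
    have cy := psd_dot hB y
    have e1 := h1 y
    have e2 := h2 x
    rw [symm_dot hA x y] at q3
    rw [hx] at q3 ax e2
    rw [hy] at q1 cy e1
    rw [dotProduct_comm b x, dotProduct_comm b y]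
    clear q2
    set a := x ⬝ᵥ b
    set c := y ⬝ᵥ b
    set p := y ⬝ᵥ A.mulVec y
    constructor
    · have : 0 ≤ (1 + ε) * ((1 + ε) * c - a) := by nlinarith
      have := nonneg_of_mul_nonneg_right this (by linarith)
      by_contra hh
      push Not at hh
      nlinarith [mul_pos (show 0 < 1 + ε by linarith) (sub_pos.2 hh), mul_nonneg ax hε0.le, mul_nonneg (mul_nonneg ax hε0.le) hε0.le]
    · have h3 := mul_le_mul_of_nonneg_left e1 (show 0 ≤ 1 - ε by linarith)
      have h4 : (1 - ε) * c ≤ a := by nlinarith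
      by_contra hh
      push Not at hh
      nlinarith [mul_pos (show 0 < 1 - ε by linarith) (sub_pos.2 hh), mul_nonneg (mul_nonneg ax hε0.le) (show 0 ≤ 1 - 2 * ε by linarith)]
end
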